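/- Let s ≥ 1. For every real δ ≥ 0, one has ((√(1 + δ·(1+s²)) − 1)/(√(1+s²) − 1))² ≤ δ if and only if δ ≤ (1 − 1/(2·√(1+s²) − 1))². In other words, B_sh(s,δ) ≤ δ holds exactly for δ ∈ [0, δ_sh(s)]. -/

import Mathlib

/-!
Put `r = √(1 + s²)` and `d = √δ`. Both sides of either inequality are squares of nonnegative
numbers, so the claim compares `√(1 + d²r²) ≤ 1 + d(r - 1)` with `d(2r - 1) ≤ 2(r - 1)`. Squaring
the former leaves `d · d(2r - 1) ≤ d · 2(r - 1)`, which is `d` times the latter; for `d = 0` both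
hold because `1 ≤ r`.
-/

lemma sqrt_one_add_sq_mul_sq_le_iff {r d : ℝ} (hr : 1 ≤ r) (hd : 0 ≤ d) :
    √(1 + d ^ 2 * r ^ 2) ≤ 1 + d * (r - 1) ↔ d * (2 * r - 1) ≤ 2 * (r - 1) := by
  calc √(1 + d ^ 2 * r ^ 2) ≤ 1 + d * (r - 1)
      ↔ 1 + d ^ 2 * r ^ 2 ≤ (1 + d * (r - 1)) ^ 2 := Real.sqrt_le_left
        (add_nonneg zero_le_one (mul_nonneg hd (sub_nonneg.mpr hr)))
    _ ↔ d * (d * (2 * r - 1)) ≤ d * (2 * (r - 1)) := by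
      constructor <;> intro h <;> linarith
    _ ↔ d * (2 * r - 1) ≤ 2 * (r - 1) := by
      rcases hd.eq_or_lt with rfl | hd
      · simpa using hr
      · exact mul_le_mul_iff_right₀ hd

lemma sqrt_one_add_sq_mul_sq_sub_one_div_le_iff {r d : ℝ} (hr : 1 < r) (hd : 0 ≤ d) :
    (√(1 + d ^ 2 * r ^ 2) - 1) / (r - 1) ≤ d ↔ d ≤ 1 - 1 / (2 * r - 1) := by
  have hr₁ : 0 < r - 1 := sub_pos.mpr hr
  have hr₂ : 0 < 2 * r - 1 := by linarith
  calc (√(1 + d ^ 2 * r ^ 2) - 1) / (r - 1) ≤ d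
      ↔ √(1 + d ^ 2 * r ^ 2) ≤ 1 + d * (r - 1) := by rw [div_le_iff₀ hr₁, sub_le_iff_le_add']
    _ ↔ d * (2 * r - 1) ≤ 2 * (r - 1) := sqrt_one_add_sq_mul_sq_le_iff hr.le hd
    _ ↔ d ≤ 1 - 1 / (2 * r - 1) := by
      rw [one_sub_div hr₂.ne', le_div_iff₀ hr₂, mul_sub_one 2 r, sub_sub, one_add_one_eq_two]

lemma sq_sqrt_one_add_mul_sq_sub_one_div_le_iff {r δ : ℝ} (hr : 1 < r) (hδ : 0 ≤ δ) :
    ((√(1 + δ * r ^ 2) - 1) / (r - 1)) ^ 2 ≤ δ ↔ δ ≤ (1 - 1 / (2 * r - 1)) ^ 2 := by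
  have hsqrt : 1 ≤ √(1 + δ * r ^ 2) :=
    Real.one_le_sqrt.mpr (le_add_of_nonneg_right (by positivity))
  have hquot : 0 ≤ (√(1 + δ * r ^ 2) - 1) / (r - 1) :=
    div_nonneg (sub_nonneg.mpr hsqrt) (sub_pos.mpr hr).le
  have hbound : 0 ≤ 1 - 1 / (2 * r - 1) :=
    sub_nonneg.mpr ((div_le_one (by linarith)).mpr (by linarith))
  rw [← Real.le_sqrt hquot hδ, ← Real.sqrt_le_left hbound]
  simpa only [Real.sq_sqrt hδ] using
    sqrt_one_add_sq_mul_sq_sub_one_div_le_iff hr (Real.sqrt_nonneg δ)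

theorem Bsh_le_iff_general {s δ : ℝ} (hs : s ≠ 0) (hδ : 0 ≤ δ) :
    ((√(1 + δ * (1 + s ^ 2)) - 1) / (√(1 + s ^ 2) - 1)) ^ 2 ≤ δ ↔
      δ ≤ (1 - 1 / (2 * √(1 + s ^ 2) - 1)) ^ 2 := by
  have hr : 1 < √(1 + s ^ 2) := Real.lt_sqrt_of_sq_lt (by simpa using sq_pos_of_ne_zero hs)
  have hsq : √(1 + s ^ 2) ^ 2 = 1 + s ^ 2 := Real.sq_sqrt (by positivity)
  simpa only [hsq] using sq_sqrt_one_add_mul_sq_sub_one_div_le_iff hr hδ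

/-- For `s ≥ 1` and `δ ≥ 0`, `B_sh(s,δ) ≤ δ` holds if and only if
`δ ≤ δ_sh(s) := (1 − 1/(2√(1+s²) − 1))²`. -/
theorem Bsh_le_iff (s : ℝ) (hs : 1 ≤ s) (δ : ℝ) (hδ : 0 ≤ δ) :
    ((Real.sqrt (1 + δ * (1 + s ^ 2)) - 1) / (Real.sqrt (1 + s ^ 2) - 1)) ^ 2 ≤ δ ↔
      δ ≤ (1 - 1 / (2 * Real.sqrt (1 + s ^ 2) - 1)) ^ 2 :=
  Bsh_le_iff_general (zero_lt_one.trans_le hs).ne' hδ
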